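/- For all integers n,d ≥ 0 and k ≥ 1 we have M^{d+1}_{k−1}(x) = C_k^d(x) as formal power series; equivalently, M^{d+1}_{k−1,n} = C^d_{k,n} for all n. -/

import Mathlib

/-- Full binary trees (every internal node has exactly two children). -/
inductive BTree : Type
  | leaf : BTree
  | node : BTree → BTree → BTree
deriving DecidableEq

namespace BTree

/-- Number of leaves of a full binary tree. -/
def numLeaves : BTree → ℕ
  | leaf => 1
  | node l r => l.numLeaves + r.numLeaves

/-- The list of pairs (left depth, right depth) of the leaves, in preorder. -/
def leafDepths : BTree → List (ℕ × ℕ)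
  | leaf => [(0, 0)]
  | node l r =>
      (l.leafDepths.map fun p => (p.1 + 1, p.2)) ++ (r.leafDepths.map fun p => (p.1, p.2 + 1))

/-- The left depth sequence `ld(t)` of the leaves of `t`, in preorder. -/
def ld (t : BTree) : List ℕ := t.leafDepths.map Prod.fst

/-- The right depth sequence `rd(t)` of the leaves of `t`, in preorder. -/
def rd (t : BTree) : List ℕ := t.leafDepths.map Prod.snd

end BTree

/-- `b ~^d c` : the sequences have equal length and agree at every position where
either entry is `< d`. -/
def DepthEq (d : ℕ) : List ℕ → List ℕ → Prop :=
  List.Forall₂ (fun a b => min a b < d → a = b)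

/-- `b ~_k c` : entrywise congruence mod `k` (and equal length). -/
def ModListEq (k : ℕ) : List ℕ → List ℕ → Prop :=
  List.Forall₂ (fun a b => a % k = b % k)

/-- The relation `t ~ t'` iff `ld(t) ~^d ld(t')` and `rd(t) ~^e rd(t')`. -/
def DeRel (d e : ℕ) (t t' : BTree) : Prop :=
  DepthEq d t.ld t'.ld ∧ DepthEq e t.rd t'.rd

/-- The relation `t ~ t'` iff `ld(t) ~_k^d ld(t')` (i.e. `ld(t) ~_k ld(t')` and
`ld(t) ~^d ld(t')`). -/
def DkRel (d k : ℕ) (t t' : BTree) : Prop :=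
  ModListEq k t.ld t'.ld ∧ DepthEq d t.ld t'.ld

/-- `T_n`: full binary trees with `n+1` leaves. -/
def Tn (n : ℕ) : Type := {t : BTree // t.numLeaves = n + 1}

/-- `C^{d,e}_n`: the number of equivalence classes of the relation `DeRel d e` on `T_n`. -/
noncomputable def Cde (d e n : ℕ) : ℕ :=
  Nat.card (Quot (fun t t' : Tn n => DeRel d e t.1 t'.1))

/-- `C^d_{k,n}`: the number of equivalence classes of `ld(t) ~_k^d ld(t')` on `T_n`. -/
noncomputable def Cdk (d k n : ℕ) : ℕ :=
  Nat.card (Quot (fun t t' : Tn n => DkRel d k t.1 t'.1))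

/-- Directions to a left or right child. -/
inductive Dir : Type
  | L : Dir
  | R : Dir
deriving DecidableEq

/-- The maximal subtree rooted at the node at position `p` (if such a node exists). -/
def subtreeAt : BTree → List Dir → Option BTree
  | t, [] => some t
  | BTree.leaf, _ :: _ => none
  | BTree.node l _, Dir.L :: p => subtreeAt l p
  | BTree.node _ r, Dir.R :: p => subtreeAt r p

/-- Replace the maximal subtree rooted at position `p` by `s` (if the position exists). -/
def replaceAt : BTree → List Dir → BTree → Option BTree
  | _, [], s => some s
  | BTree.leaf, _ :: _, _ => none
  | BTree.node l r, Dir.L :: p, s => (replaceAt l p s).map fun l' => BTree.node l' r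
  | BTree.node l r, Dir.R :: p, s => (replaceAt r p s).map fun r' => BTree.node l r'

/-- `leftAssoc t₀ [t₁,…,t_m] = t₀ ∧ t₁ ∧ ⋯ ∧ t_m` with `∧` performed left to right. -/
def leftAssoc : BTree → List BTree → BTree := List.foldl BTree.node

/-- `t'` is obtained from `t` by a right `k`-rotation at the node at position `p`:
the maximal subtree `t₀ ∧ t₁ ∧ ⋯ ∧ t_{k+1}` rooted there (with `∧` performed left to
right) is replaced by `t₀ ∧ (t₁ ∧ ⋯ ∧ t_{k+1})`.  The left depth of that node is
`p.count Dir.L`. -/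
def IsRightKRot (k : ℕ) (p : List Dir) (t t' : BTree) : Prop :=
  ∃ (t₀ t₁ : BTree) (rest : List BTree), rest.length = k ∧
    subtreeAt t p = some (leftAssoc t₀ (t₁ :: rest)) ∧
    replaceAt t p (BTree.node t₀ (leftAssoc t₁ rest)) = some t'

/-- `IsTopOf s u`: `s` is a subtree of `u` rooted at the root of `u`. -/
def IsTopOf : BTree → BTree → Prop
  | BTree.leaf, _ => True
  | BTree.node l r, BTree.node l' r' => IsTopOf l l' ∧ IsTopOf r r'
  | BTree.node _ _, BTree.leaf => False

/-- `t` contains `s` at left depth `δ`: `t` has a subtree equal to `s` rooted at a node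
of left depth `δ`. -/
def ContainsAt (t s : BTree) (δ : ℕ) : Prop :=
  ∃ (p : List Dir) (u : BTree), subtreeAt t p = some u ∧ p.count Dir.L = δ ∧ IsTopOf s u

/-- `t` avoids `s` at left depth `δ`. -/
def AvoidsAt (t s : BTree) (δ : ℕ) : Prop := ¬ ContainsAt t s δ

/-- `comb_k`: the left-to-right `∧`-product of `k+1` single leaves. -/
def comb (k : ℕ) : BTree := leftAssoc BTree.leaf (List.replicate k BTree.leaf)

/-- `comb_k^1 := t₀ ∧ comb_k` with `t₀` a single leaf. -/
def comb1 (k : ℕ) : BTree := BTree.node BTree.leaf (comb k)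

/-- One left `k`-rotation step, at a node of left depth at least `d-1`, from `t` to `t'`. -/
def LeftRotStep (d k : ℕ) (t t' : BTree) : Prop :=
  ∃ p : List Dir, d - 1 ≤ p.count Dir.L ∧ IsRightKRot k p t' t

/-- The `(d;k)`-order: `s ≤ t` iff `s` is obtained from `t` by finitely many left
`k`-rotations at nodes of left depth at least `d-1`. -/
def dkLE (d k : ℕ) (s t : BTree) : Prop := Relation.ReflTransGen (LeftRotStep d k) t s

/-- `t` is `(d;k)`-minimal. -/
def dkMinimal (d k : ℕ) (t : BTree) : Prop := ∀ s, dkLE d k s t → s = t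

/-- `t` is `(d;k)`-maximal. -/
def dkMaximal (d k : ℕ) (t : BTree) : Prop := ∀ s, dkLE d k t s → s = t

/-- `M^d_{j,n}`: the number of binary trees in `T_n` avoiding `comb_{j+1}` at every left
depth at least `d-1`. -/
noncomputable def Mnum (j d n : ℕ) : ℕ :=
  Nat.card {t : BTree // t.numLeaves = n + 1 ∧ ∀ δ, d - 1 ≤ δ → AvoidsAt t (comb (j + 1)) δ}

/-- `C^d_{k,n}` with the convention `C^0_{k,n} := M^1_{k-1,n}`. -/
noncomputable def Cknum (k : ℕ) : ℕ → ℕ → ℕ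
  | 0, n => Mnum (k - 1) 1 n
  | d + 1, n => Cdk (d + 1) k n

/-- The generating function `C_k^d(x) = Σ_{n≥0} C^d_{k,n} x^{n+1}`. -/
noncomputable def CkdX (k d : ℕ) : PowerSeries ℚ :=
  PowerSeries.mk fun m => match m with
    | 0 => 0
    | n + 1 => (Cknum k d n : ℚ)

/-- The generating function `M_j^d(x) = Σ_{n≥0} M^d_{j,n} x^{n+1}`. -/
noncomputable def MkdX (j d : ℕ) : PowerSeries ℚ :=
  PowerSeries.mk fun m => match m with
    | 0 => 0
    | n + 1 => (Mnum j d n : ℚ)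

namespace BTree

theorem ld_leaf : ld leaf = [0] := rfl

theorem ld_node (l r : BTree) : ld (node l r) = l.ld.map (· + 1) ++ r.ld := by
  simp [ld, leafDepths, Function.comp_def]

theorem ld_length (t : BTree) : t.ld.length = t.numLeaves := by
  induction t with
  | leaf => rfl
  | node l r hl hr => simp [ld_node, numLeaves, hl, hr]

theorem ld_form (t : BTree) : ∃ X : List ℕ, t.ld = X.map (· + 1) ++ [0] := by
  induction t with
  | leaf => exact ⟨[], rfl⟩
  | node l r hl hr =>
    obtain ⟨Y, hY⟩ := hr
    exact ⟨l.ld ++ Y, by simp [ld_node, hY]⟩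

/-- Length of the left chain starting at the root. -/
def lc : BTree → ℕ
  | leaf => 0
  | node l _ => l.lc + 1

/-- Avoids `comb k` everywhere. -/
def Av (k : ℕ) : BTree → Prop
  | leaf => True
  | node l r => l.lc + 1 < k ∧ l.Av k ∧ r.Av k

/-- Avoids `comb k` at left depth at least `d`. -/
def AvD (k : ℕ) : ℕ → BTree → Prop
  | 0, t => t.Av k
  | _ + 1, leaf => True
  | d + 1, node l r => AvD k d l ∧ AvD k (d + 1) r

/-- Normal forms for the relation mod `k`. -/
def NF (k : ℕ) : BTree → Prop
  | leaf => True
  | node l r => l.NF k ∧ r.Av k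

/-- Normal forms for the relation of depth `d + 1` mod `k`. -/
def NFD (k : ℕ) : ℕ → BTree → Prop
  | 0, t => t.NF k
  | _ + 1, leaf => True
  | d + 1, node l r => NFD k d l ∧ NFD k (d + 1) r

theorem avD_zero (k : ℕ) (t : BTree) : AvD k 0 t = t.Av k := by
  cases t <;> simp [AvD]

theorem nfD_zero (k : ℕ) (t : BTree) : NFD k 0 t = t.NF k := by
  cases t <;> simp [NFD]

theorem Av.nf {k : ℕ} {t : BTree} (h : t.Av k) : t.NF k := by
  induction t with
  | leaf => trivial
  | node l r hl hr => exact ⟨hl h.2.1, h.2.2⟩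

theorem NF.av {k : ℕ} {t : BTree} (h : t.NF k) (hc : t.lc < k) : t.Av k := by
  induction t with
  | leaf => trivial
  | node l r hl hr =>
    simp only [lc] at hc
    exact ⟨hc, hl h.1 (by omega), h.2⟩


theorem comb_succ (k : ℕ) : comb (k + 1) = node (comb k) leaf := by
  simp [comb, leftAssoc, List.replicate_succ']

theorem isTopOf_comb (k : ℕ) (t : BTree) : IsTopOf (comb k) t ↔ k ≤ t.lc := by
  induction k generalizing t with
  | zero => simp [comb, leftAssoc, IsTopOf]
  | succ k ih =>
    rw [comb_succ]
    cases t with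
    | leaf => simp [IsTopOf, lc]
    | node l r => simp [IsTopOf, lc, ih]

theorem containsAt_leaf (s : BTree) (δ : ℕ) :
    ContainsAt leaf s δ ↔ δ = 0 ∧ IsTopOf s leaf := by
  constructor
  · rintro ⟨p, u, h1, h2, h3⟩
    cases p with
    | nil =>
      simp [subtreeAt] at h1
      subst h1
      exact ⟨by simpa using h2.symm, h3⟩
    | cons a p => simp [subtreeAt] at h1
  · rintro ⟨rfl, h⟩
    exact ⟨[], leaf, rfl, rfl, h⟩

theorem containsAt_node (l r s : BTree) (δ : ℕ) :
    ContainsAt (node l r) s δ ↔ (δ = 0 ∧ IsTopOf s (node l r)) ∨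
      (∃ e, δ = e + 1 ∧ ContainsAt l s e) ∨ ContainsAt r s δ := by
  constructor
  · rintro ⟨p, u, h1, h2, h3⟩
    cases p with
    | nil =>
      simp [subtreeAt] at h1
      subst h1
      exact Or.inl ⟨by simpa using h2.symm, h3⟩
    | cons a p =>
      cases a with
      | L =>
        refine Or.inr (Or.inl ⟨p.count Dir.L, ?_, p, u, by simpa [subtreeAt] using h1, rfl, h3⟩)
        simpa using h2.symm
      | R =>
        refine Or.inr (Or.inr ⟨p, u, by simpa [subtreeAt] using h1, ?_, h3⟩)
        simpa using h2
  · rintro (⟨rfl, h⟩ | ⟨e, rfl, p, u, h1, h2, h3⟩ | ⟨p, u, h1, h2, h3⟩)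
    · exact ⟨[], _, rfl, rfl, h⟩
    · exact ⟨Dir.L :: p, u, by simpa [subtreeAt] using h1, by simp [h2], h3⟩
    · exact ⟨Dir.R :: p, u, by simpa [subtreeAt] using h1, by simp [h2], h3⟩

theorem avD_iff {k : ℕ} (hk : 1 ≤ k) (t : BTree) (d : ℕ) :
    (∀ δ, d ≤ δ → AvoidsAt t (comb k) δ) ↔ AvD k d t := by
  induction t generalizing d with
  | leaf =>
    have h1 : AvD k d leaf := by cases d <;> trivial
    simp only [h1, iff_true, AvoidsAt, containsAt_leaf, isTopOf_comb, lc]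
    intro δ _ h
    omega
  | node l r hl hr =>
    cases d with
    | zero =>
      have hl0 := hl 0
      have hr0 := hr 0
      simp only [AvD, Nat.zero_le, true_imp_iff] at hl0 hr0 ⊢
      simp only [Av, ← hl0, ← hr0, AvoidsAt, containsAt_node, isTopOf_comb, lc]
      constructor
      · intro h
        refine ⟨?_, ?_, ?_⟩
        · by_contra hc
          exact h 0 (Or.inl ⟨rfl, by omega⟩)
        · intro e he
          exact h (e + 1) (Or.inr (Or.inl ⟨e, rfl, he⟩))
        · intro e he
          exact h e (Or.inr (Or.inr he))
      · rintro ⟨h1, h2, h3⟩ δ (⟨_, h⟩ | ⟨e, rfl, h⟩ | h)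
        · omega
        · exact h2 _ h
        · exact h3 _ h
    | succ d =>
      simp only [AvD, ← hl, ← hr, AvoidsAt, containsAt_node]
      constructor
      · intro h
        refine ⟨?_, ?_⟩
        · intro e hde he
          exact h (e + 1) (by omega) (Or.inr (Or.inl ⟨e, rfl, he⟩))
        · intro e hde he
          exact h e hde (Or.inr (Or.inr he))
      · rintro ⟨h2, h3⟩ δ hδ (⟨_, h⟩ | ⟨e, rfl, h⟩ | h)
        · omega
        · exact h2 _ (by omega) h
        · exact h3 _ hδ h


/-- Move the right spine to the left spine. -/
def flipR : BTree → BTree → BTree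
  | acc, leaf => acc
  | acc, node l r => flipR (node acc l) r

/-- Move the left spine to the right spine. -/
def flipL : BTree → BTree → BTree
  | acc, leaf => acc
  | acc, node l r => flipL (node r acc) l

theorem flipL_flipR (s t : BTree) : flipL leaf (flipR s t) = flipL t s := by
  induction t generalizing s with
  | leaf => rfl
  | node l r hl hr => simp [flipR, hr, flipL]

theorem flipR_flipL (s t : BTree) : flipR leaf (flipL s t) = flipR t s := by
  induction t generalizing s with
  | leaf => rfl
  | node l r hl hr => simp [flipL, hl, flipR]

theorem numLeaves_flipR (s t : BTree) :
    (flipR s t).numLeaves + 1 = s.numLeaves + t.numLeaves := by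
  induction t generalizing s with
  | leaf => rfl
  | node l r hl hr => simp [flipR, hr, numLeaves]; omega

theorem numLeaves_flipL (s t : BTree) :
    (flipL s t).numLeaves + 1 = s.numLeaves + t.numLeaves := by
  induction t generalizing s with
  | leaf => rfl
  | node l r hl hr => simp [flipL, hl, numLeaves]; omega

theorem nf_flipR {k : ℕ} (s t : BTree) (hs : s.NF k) (ht : AvD k 1 t) : (flipR s t).NF k := by
  induction t generalizing s with
  | leaf => exact hs
  | node l r hl hr => exact hr _ ⟨hs, avD_zero k l ▸ ht.1⟩ ht.2

theorem avD_flipL {k : ℕ} (s t : BTree) (hs : AvD k 1 s) (ht : t.NF k) :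
    AvD k 1 (flipL s t) := by
  induction t generalizing s with
  | leaf => exact hs
  | node l r hl hr => exact hl _ ⟨(avD_zero k r).symm ▸ ht.2, hs⟩ ht.1

/-- From avoiders to normal forms. -/
def toNF : ℕ → BTree → BTree
  | 0, t => flipR leaf t
  | _ + 1, leaf => leaf
  | d + 1, node l r => node (toNF d l) (toNF (d + 1) r)

/-- From normal forms to avoiders. -/
def ofNF : ℕ → BTree → BTree
  | 0, t => flipL leaf t
  | _ + 1, leaf => leaf
  | d + 1, node l r => node (ofNF d l) (ofNF (d + 1) r)

theorem ofNF_toNF (d : ℕ) (t : BTree) : ofNF d (toNF d t) = t := by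
  induction t generalizing d with
  | leaf => cases d <;> rfl
  | node l r hl hr =>
    cases d with
    | zero => simp only [toNF, ofNF, flipL_flipR]; rfl
    | succ d => simp [toNF, ofNF, hl, hr]

theorem toNF_ofNF (d : ℕ) (t : BTree) : toNF d (ofNF d t) = t := by
  induction t generalizing d with
  | leaf => cases d <;> rfl
  | node l r hl hr =>
    cases d with
    | zero => simp only [toNF, ofNF, flipR_flipL]; rfl
    | succ d => simp [toNF, ofNF, hl, hr]

theorem numLeaves_toNF (d : ℕ) (t : BTree) : (toNF d t).numLeaves = t.numLeaves := by
  induction t generalizing d with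
  | leaf => cases d <;> rfl
  | node l r hl hr =>
    cases d with
    | zero =>
      have := numLeaves_flipR leaf (node l r)
      simp only [numLeaves, toNF] at this ⊢
      omega
    | succ d => simp [toNF, numLeaves, hl, hr]

theorem numLeaves_ofNF (d : ℕ) (t : BTree) : (ofNF d t).numLeaves = t.numLeaves := by
  rw [← numLeaves_toNF d (ofNF d t), toNF_ofNF]

theorem nfD_toNF {k : ℕ} (d : ℕ) (t : BTree) (h : AvD k (d + 1) t) : NFD k d (toNF d t) := by
  induction t generalizing d with
  | leaf => cases d <;> trivial
  | node l r hl hr =>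
    cases d with
    | zero => exact (nfD_zero k _).symm ▸ nf_flipR leaf (node l r) trivial h
    | succ d => exact ⟨hl _ h.1, hr _ h.2⟩

theorem avD_ofNF {k : ℕ} (d : ℕ) (t : BTree) (h : NFD k d t) : AvD k (d + 1) (ofNF d t) := by
  induction t generalizing d with
  | leaf => cases d <;> trivial
  | node l r hl hr =>
    cases d with
    | zero => exact avD_flipL _ _ trivial h
    | succ d => exact ⟨hl _ h.1, hr _ h.2⟩


/-- Pointwise relation. -/
def PRel (d k a b : ℕ) : Prop := a % k = b % k ∧ (min a b < d → a = b)

theorem dkRel_iff (d k : ℕ) (t t' : BTree) :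
    DkRel d k t t' ↔ List.Forall₂ (PRel d k) t.ld t'.ld := by
  unfold DkRel ModListEq DepthEq
  generalize t.ld = A
  generalize t'.ld = B
  induction A generalizing B with
  | nil => cases B <;> simp
  | cons a A ih =>
    cases B with
    | nil => simp
    | cons b B =>
      simp only [List.forall₂_cons, ← ih, PRel]
      tauto

theorem PRel.refl (d k a : ℕ) : PRel d k a a := ⟨rfl, fun _ => rfl⟩

theorem PRel.symm {d k a b : ℕ} (h : PRel d k a b) : PRel d k b a :=
  ⟨h.1.symm, fun hh => (h.2 (by rwa [min_comm])).symm⟩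

theorem PRel.trans {d k a b c : ℕ} (h : PRel d k a b) (h' : PRel d k b c) : PRel d k a c := by
  refine ⟨h.1.trans h'.1, fun hh => ?_⟩
  have h1 := h.2
  have h2 := h'.2
  rcases min_lt_iff.1 hh with h3 | h3
  · have := h1 (min_lt_of_left_lt h3)
    subst this
    exact h2 (min_lt_of_left_lt h3)
  · have := h2 (min_lt_of_right_lt h3)
    subst this
    exact h1 (min_lt_of_right_lt h3)

theorem PRel.add_one {d k a b : ℕ} (h : PRel d k a b) : PRel (d + 1) k (a + 1) (b + 1) := by
  refine ⟨Nat.ModEq.add_right 1 h.1, fun hh => ?_⟩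
  rw [h.2 (by omega)]

theorem PRel.sub_one {d k a b : ℕ} (h : PRel (d + 1) k (a + 1) (b + 1)) : PRel d k a b := by
  refine ⟨Nat.ModEq.add_right_cancel' 1 h.1, fun hh => ?_⟩
  have := h.2 (by omega)
  omega

theorem forall₂_trans {R : ℕ → ℕ → Prop} (hR : ∀ a b c, R a b → R b c → R a c)
    {A B C : List ℕ} (h : List.Forall₂ R A B) (h' : List.Forall₂ R B C) :
    List.Forall₂ R A C := by
  induction h generalizing C with
  | nil => exact h'
  | cons h1 _ ih =>
    cases h' with
    | cons h2 h3 => exact List.Forall₂.cons (hR _ _ _ h1 h2) (ih h3)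

theorem forall₂_refl' {R : ℕ → ℕ → Prop} (hR : ∀ a, R a a) (A : List ℕ) :
    List.Forall₂ R A A := by
  induction A with
  | nil => exact List.Forall₂.nil
  | cons a A ih => exact List.Forall₂.cons (hR a) ih

theorem forall₂_append' {R : ℕ → ℕ → Prop} {A B C D : List ℕ}
    (h : List.Forall₂ R A B) (h' : List.Forall₂ R C D) :
    List.Forall₂ R (A ++ C) (B ++ D) := by
  induction h with
  | nil => exact h'
  | cons h1 _ ih => exact List.Forall₂.cons h1 ih

theorem forall₂_append_inv {R : ℕ → ℕ → Prop} {A B C D : List ℕ} (hl : A.length = B.length)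
    (h : List.Forall₂ R (A ++ C) (B ++ D)) :
    List.Forall₂ R A B ∧ List.Forall₂ R C D := by
  induction A generalizing B with
  | nil =>
    cases B with
    | nil => exact ⟨List.Forall₂.nil, h⟩
    | cons b B => simp at hl
  | cons a A ih =>
    cases B with
    | nil => simp at hl
    | cons b B =>
      simp only [List.cons_append, List.forall₂_cons] at h
      obtain ⟨h1, h2⟩ := ih (by simpa using hl) h.2
      exact ⟨List.Forall₂.cons h.1 h1, h2⟩

theorem forall₂_map' {R S : ℕ → ℕ → Prop} {f : ℕ → ℕ} (hR : ∀ a b, R a b → S (f a) (f b))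
    {A B : List ℕ} (h : List.Forall₂ R A B) : List.Forall₂ S (A.map f) (B.map f) := by
  induction h with
  | nil => exact List.Forall₂.nil
  | cons h1 _ ih => exact List.Forall₂.cons (hR _ _ h1) ih

theorem dkRel_equivalence (d k n : ℕ) :
    Equivalence (fun t t' : Tn n => DkRel d k t.1 t'.1) where
  refl t := (dkRel_iff _ _ _ _).2 (forall₂_refl' (PRel.refl d k) _)
  symm h := by
    rw [dkRel_iff] at h ⊢
    exact List.Forall₂.flip (h.imp fun _ _ hh => hh.symm)
  trans h h' := by
    rw [dkRel_iff] at h h' ⊢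
    exact forall₂_trans (R := PRel d k) (fun _ _ _ => PRel.trans) h h'


theorem exists_nf_aux {k : ℕ} (hk : 1 ≤ k) (l : BTree) (hl : l.NF k) (r : BTree) (hr : r.NF k) :
    ∀ m, m ≤ r.lc → ∃ s : BTree, s.NF k ∧
      List.Forall₂ (fun a b => a % k = b % k) (l.ld.map (· + (m + 1)) ++ r.ld) s.ld := by
  induction r with
  | leaf =>
    intro m hm
    simp only [lc] at hm
    obtain rfl : m = 0 := by omega
    exact ⟨node l leaf, ⟨hl, trivial⟩, by
      rw [ld_node]; exact forall₂_refl' (R := fun a b => a % k = b % k) (fun _ => rfl) _⟩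
  | node a b ha hb =>
    have key : ∀ m, m + 1 ≤ (node a b).lc → ∃ s : BTree, s.NF k ∧
      List.Forall₂ (fun a b => a % k = b % k)
        (l.ld.map (· + (m + 1 + 1)) ++ (node a b).ld) s.ld := by
      intro m hm
      simp only [lc] at hm
      obtain ⟨s, hs, h⟩ := ha hr.1 m (by omega)
      refine ⟨node s b, ⟨hs, hr.2⟩, ?_⟩
      have h1 := forall₂_map' (S := fun a b => a % k = b % k) (f := (· + 1))
        (fun a b (hab : a % k = b % k) => Nat.ModEq.add_right 1 hab) h
      have h2 := forall₂_append' h1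
        (forall₂_refl' (R := fun a b => a % k = b % k) (fun _ => rfl) b.ld)
      rw [ld_node, ld_node]
      simpa [Function.comp_def, add_assoc] using h2
    intro m hm
    cases m with
    | succ m => exact key m hm
    | zero =>
      by_cases hc : (node a b).lc < k
      · exact ⟨node l (node a b), ⟨hl, hr.av hc⟩, by
          rw [ld_node l]; exact forall₂_refl' (R := fun a b => a % k = b % k) (fun _ => rfl) _⟩
      · obtain ⟨s, hs, h⟩ := key (k - 1) (by omega)
        refine ⟨s, hs, forall₂_trans (R := fun a b => a % k = b % k) (fun _ _ _ => Eq.trans) ?_ h⟩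
        refine forall₂_append' ?_ (forall₂_refl' (R := fun a b => a % k = b % k) (fun _ => rfl) _)
        rw [List.forall₂_map_left_iff, List.forall₂_map_right_iff]
        refine forall₂_refl' (fun a => ?_) _
        have : a + (k - 1 + 1 + 1) = a + (0 + 1) + k := by omega
        rw [this, Nat.add_mod_right]

theorem exists_nf {k : ℕ} (hk : 1 ≤ k) (t : BTree) : ∃ s : BTree, s.NF k ∧
      List.Forall₂ (fun a b => a % k = b % k) t.ld s.ld := by
  induction t with
  | leaf => exact ⟨leaf, trivial, forall₂_refl' (R := fun a b => a % k = b % k) (fun _ => rfl) _⟩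
  | node l r hl hr =>
    obtain ⟨l', hl1, hl2⟩ := hl
    obtain ⟨r', hr1, hr2⟩ := hr
    obtain ⟨s, hs, h⟩ := exists_nf_aux hk l' hl1 r' hr1 0 (Nat.zero_le _)
    refine ⟨s, hs, forall₂_trans (R := fun a b => a % k = b % k) (fun _ _ _ => Eq.trans) ?_ h⟩
    rw [ld_node]
    exact forall₂_append' (forall₂_map' (f := (· + 1))
        (fun a b (hab : a % k = b % k) => Nat.ModEq.add_right 1 hab) hl2) hr2

theorem forall₂_one {k : ℕ} (X Y : List ℕ)
    (h : List.Forall₂ (fun a b => a % k = b % k) (X.map (· + 1) ++ [0]) (Y.map (· + 1) ++ [0])) :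
    List.Forall₂ (PRel 1 k) (X.map (· + 1) ++ [0]) (Y.map (· + 1) ++ [0]) := by
  have hlen : X.length = Y.length := by simpa using h.length_eq
  obtain ⟨h1, _⟩ := forall₂_append_inv (by simpa using hlen) h
  refine forall₂_append' ?_ (forall₂_refl' (PRel.refl 1 k) _)
  rw [List.forall₂_map_left_iff, List.forall₂_map_right_iff] at h1 ⊢
  exact h1.imp fun a b hab => ⟨hab, fun hh => by omega⟩

theorem exists_nfD {k : ℕ} (hk : 1 ≤ k) (d : ℕ) (t : BTree) : ∃ s : BTree, NFD k d s ∧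
      List.Forall₂ (PRel (d + 1) k) t.ld s.ld := by
  induction t generalizing d with
  | leaf => exact ⟨leaf, by cases d <;> trivial, forall₂_refl' (PRel.refl _ _) _⟩
  | node l r hl hr =>
    cases d with
    | zero =>
      obtain ⟨s, hs, h⟩ := exists_nf hk (node l r)
      refine ⟨s, (nfD_zero k s).symm ▸ hs, ?_⟩
      obtain ⟨X, hX⟩ := ld_form (node l r)
      obtain ⟨Y, hY⟩ := ld_form s
      rw [hX, hY] at h ⊢
      exact forall₂_one X Y h
    | succ d =>
      obtain ⟨l', hl1, hl2⟩ := hl d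
      obtain ⟨r', hr1, hr2⟩ := hr (d + 1)
      refine ⟨node l' r', ⟨hl1, hr1⟩, ?_⟩
      rw [ld_node, ld_node]
      exact forall₂_append' (forall₂_map' (fun a b hab => hab.add_one) hl2) hr2


theorem split_aux {R : ℕ → ℕ → Prop} (hR : ∀ a b, R a b → (a = 1 ↔ b = 1)) (X Y A B : List ℕ)
    (h : List.Forall₂ R (X.map (· + 2) ++ 1 :: A) (Y.map (· + 2) ++ 1 :: B)) :
    X.length = Y.length := by
  induction X generalizing Y with
  | nil =>
    cases Y with
    | nil => rfl
    | cons y Y =>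
      simp only [List.map_nil, List.nil_append, List.map_cons, List.cons_append,
        List.forall₂_cons] at h
      have := hR _ _ h.1
      omega
  | cons x X ih =>
    cases Y with
    | nil =>
      simp only [List.map_nil, List.nil_append, List.map_cons, List.cons_append,
        List.forall₂_cons] at h
      have := hR _ _ h.1
      omega
    | cons y Y =>
      simp only [List.map_cons, List.cons_append, List.forall₂_cons] at h
      simp [ih Y h.2]

theorem split_ld {R : ℕ → ℕ → Prop} (hR : ∀ a b, R a b → (a = 1 ↔ b = 1)) (l r l' r' : BTree)
    (h : List.Forall₂ R (node l r).ld (node l' r').ld) :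
    List.Forall₂ R (l.ld.map (· + 1)) (l'.ld.map (· + 1)) ∧ List.Forall₂ R r.ld r'.ld := by
  rw [ld_node, ld_node] at h
  refine forall₂_append_inv ?_ h
  obtain ⟨X, hX⟩ := ld_form l
  obtain ⟨Y, hY⟩ := ld_form l'
  rw [hX, hY] at h ⊢
  have := split_aux hR X Y r.ld r'.ld (by simpa [Function.comp_def, add_assoc] using h)
  simp [this]

theorem numLeaves_pos (t : BTree) : 0 < t.numLeaves := by
  induction t with
  | leaf => simp [numLeaves]
  | node l r hl hr => simp [numLeaves]; omega

theorem not_leaf_node {R : ℕ → ℕ → Prop} (l r : BTree) :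
    ¬ List.Forall₂ R leaf.ld (node l r).ld := by
  intro h
  have h1 := h.length_eq
  rw [ld_length, ld_length] at h1
  have := numLeaves_pos l
  have := numLeaves_pos r
  simp only [numLeaves] at h1
  omega

theorem not_node_leaf {R : ℕ → ℕ → Prop} (l r : BTree) :
    ¬ List.Forall₂ R (node l r).ld leaf.ld := by
  intro h
  have h1 := h.length_eq
  rw [ld_length, ld_length] at h1
  have := numLeaves_pos l
  have := numLeaves_pos r
  simp only [numLeaves] at h1
  omega

theorem ld_injective (t t' : BTree) (h : List.Forall₂ (· = ·) t.ld t'.ld) : t = t' := by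
  induction t generalizing t' with
  | leaf =>
    cases t' with
    | leaf => rfl
    | node l r => exact absurd h (not_leaf_node l r)
  | node l r hl hr =>
    cases t' with
    | leaf => exact absurd h (not_node_leaf l r)
    | node l' r' =>
      obtain ⟨h1, h2⟩ := split_ld (fun a b hab => by rw [hab]) _ _ _ _ h
      rw [List.forall₂_map_left_iff, List.forall₂_map_right_iff] at h1
      rw [hl l' (h1.imp fun a b hab => by omega), hr r' h2]

def Step (k a b : ℕ) : Prop := a ≤ b + 1 ∧ b + 2 ≤ a + k

theorem ld_head (t : BTree) : ∃ L, t.ld = t.lc :: L := by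
  induction t with
  | leaf => exact ⟨[], rfl⟩
  | node l r hl hr =>
    obtain ⟨L, hL⟩ := hl
    exact ⟨_, by rw [ld_node, hL]; rfl⟩

theorem chain_ld {k : ℕ} (hk : 1 ≤ k) (t : BTree) (h : t.NF k) :
    List.IsChain (Step k) t.ld := by
  induction t with
  | leaf => simp [ld_leaf]
  | node l r hl hr =>
    have hl' := hl h.1
    have hr' := hr h.2.nf
    have hc : r.lc + 1 ≤ k := by
      have h2 := h.2
      cases r with
      | leaf => simpa [lc] using hk
      | node a b =>
        have := h2.1
        simp only [lc]
        omega
    rw [ld_node, List.isChain_append]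
    refine ⟨?_, hr', ?_⟩
    · refine List.isChain_map_of_isChain _ (fun a b hab => ?_) hl'
      unfold Step at hab ⊢
      omega
    · obtain ⟨X, hX⟩ := ld_form l
      obtain ⟨L, hL⟩ := ld_head r
      rw [hX, hL]
      intro x hx y hy
      simp at hx hy
      subst hx hy
      unfold Step
      omega

theorem mod_unique {k : ℕ} (X Y : List ℕ)
    (hX : List.IsChain (Step k) (X ++ [0])) (hY : List.IsChain (Step k) (Y ++ [0]))
    (h : List.Forall₂ (fun a b => a % k = b % k) (X ++ [0]) (Y ++ [0])) :
    List.Forall₂ (· = ·) (X ++ [0]) (Y ++ [0]) := by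
  induction X generalizing Y with
  | nil =>
    have := h.length_eq
    cases Y with
    | nil => simp
    | cons y Y => simp at this
  | cons x X ih =>
    cases Y with
    | nil => have := h.length_eq; simp at this
    | cons y Y =>
      simp only [List.cons_append, List.forall₂_cons] at h ⊢
      have h2 := ih Y hX.tail hY.tail h.2
      refine ⟨?_, h2⟩
      rw [List.forall₂_eq_eq_eq] at h2
      have hX' := hX
      have hY' := hY
      simp only [List.cons_append] at hX' hY'
      rw [← h2] at hY'
      obtain ⟨z, Z, hz⟩ : ∃ z Z, X ++ [0] = z :: Z := by
        cases X with
        | nil => exact ⟨_, _, rfl⟩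
        | cons a X => exact ⟨_, _, rfl⟩
      rw [hz, List.isChain_cons_cons] at hX' hY'
      have hx := hX'.1
      have hy := hY'.1
      have hm : x ≡ y [MOD k] := h.1
      unfold Step at hx hy
      rcases le_total x y with hxy | hxy
      · have hd := (Nat.modEq_iff_dvd' hxy).1 hm
        have := Nat.eq_zero_of_dvd_of_lt hd (by omega)
        omega
      · have hd := (Nat.modEq_iff_dvd' hxy).1 hm.symm
        have := Nat.eq_zero_of_dvd_of_lt hd (by omega)
        omega

theorem nfD_unique {k : ℕ} (hk : 1 ≤ k) (d : ℕ) (t t' : BTree) (ht : NFD k d t) (ht' : NFD k d t')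
    (h : List.Forall₂ (PRel (d + 1) k) t.ld t'.ld) : t = t' := by
  induction t generalizing t' d with
  | leaf =>
    cases t' with
    | leaf => rfl
    | node l r => exact absurd h (not_leaf_node l r)
  | node l r hl hr =>
    cases t' with
    | leaf => exact absurd h (not_node_leaf l r)
    | node l' r' =>
      cases d with
      | zero =>
        apply ld_injective
        have c1 := chain_ld hk _ ht
        have c2 := chain_ld hk _ ht'
        obtain ⟨X, hX⟩ := ld_form (node l r)
        obtain ⟨Y, hY⟩ := ld_form (node l' r')
        rw [hX] at h c1 ⊢
        rw [hY] at h c2 ⊢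
        exact mod_unique _ _ c1 c2 (h.imp fun a b hab => hab.1)
      | succ d =>
        obtain ⟨h1, h2⟩ := split_ld (fun a b hab => by
          have := hab.2
          omega) _ _ _ _ h
        rw [List.forall₂_map_left_iff, List.forall₂_map_right_iff] at h1
        rw [hl d l' ht.1 ht'.1 (h1.imp fun a b hab => hab.sub_one),
          hr (d + 1) r' ht.2 ht'.2 h2]


theorem card_eq {k : ℕ} (hk : 1 ≤ k) (d n : ℕ) :
    Mnum (k - 1) (d + 1 + 1) n = Cdk (d + 1) k n := by
  have e1 : {t : BTree // t.numLeaves = n + 1 ∧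
      ∀ δ, d + 1 + 1 - 1 ≤ δ → AvoidsAt t (comb (k - 1 + 1)) δ} ≃
      {t : BTree // t.numLeaves = n + 1 ∧ NFD k d t} :=
    { toFun := fun t => ⟨toNF d t.1, by rw [numLeaves_toNF]; exact t.2.1, by
        obtain ⟨t, h1, h2⟩ := t
        rw [Nat.sub_add_cancel hk, Nat.add_sub_cancel, avD_iff hk] at h2
        exact nfD_toNF d _ h2⟩
      invFun := fun t => ⟨ofNF d t.1, by rw [numLeaves_ofNF]; exact t.2.1, by
        rw [Nat.sub_add_cancel hk, Nat.add_sub_cancel, avD_iff hk]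
        exact avD_ofNF d _ t.2.2⟩
      left_inv := fun t => Subtype.ext (ofNF_toNF d t.1)
      right_inv := fun t => Subtype.ext (toNF_ofNF d t.1) }
  unfold Mnum Cdk
  rw [Nat.card_congr e1]
  refine Nat.card_congr (Equiv.ofBijective (fun t => Quot.mk _ (⟨t.1, t.2.1⟩ : Tn n)) ⟨?_, ?_⟩)
  · intro t t' h
    have h1 := ((dkRel_equivalence (d + 1) k n).quot_mk_eq_iff _ _).1 h
    rw [dkRel_iff] at h1
    exact Subtype.ext (nfD_unique hk d _ _ t.2.2 t'.2.2 h1)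
  · intro q
    obtain ⟨t, rfl⟩ := Quot.exists_rep q
    obtain ⟨s, hs, h⟩ := exists_nfD hk d t.1
    have hn : s.numLeaves = n + 1 := by
      rw [← ld_length, ← h.length_eq, ld_length]; exact t.2
    refine ⟨⟨s, hn, hs⟩, ?_⟩
    apply Eq.symm
    apply Quot.sound
    rw [dkRel_iff]
    exact h

end BTree

/-- for `k ≥ 1` and `d,n ≥ 0`, `M^{d+1}_{k-1}(x) = C_k^d(x)`;
equivalently `M^{d+1}_{k-1,n} = C^d_{k,n}` for all `n`. -/
theorem stmt15 (k d : ℕ) (hk : 1 ≤ k) :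
    MkdX (k - 1) (d + 1) = CkdX k d ∧ ∀ n : ℕ, Mnum (k - 1) (d + 1) n = Cknum k d n := by
  have main : ∀ n : ℕ, Mnum (k - 1) (d + 1) n = Cknum k d n := by
    intro n
    cases d with
    | zero => rfl
    | succ d => exact BTree.card_eq hk d n
  refine ⟨?_, main⟩
  unfold MkdX CkdX
  congr 1
  funext m
  cases m with
  | zero => rfl
  | succ n => simp only [main n]
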